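/- Let G be a connected simple graph with m edges and n+1 vertices, and suppose iota is an m-by-g integer matrix whose columns form a Z-basis of Flow(G) with pairwise nonpositive inner products (a cycle M-basis). Then the number of equivalence classes of Z^g modulo the Z-image of L* = iota^T iota is finite and equals the number of spanning trees of G. -/

import Mathlib

open Matrix

/-!
A set `S` of `g` edges selects a `g × g` minor of `ι`, the matrix of the restriction of flows to
`S`. If the edges outside `S` connect all vertices, every integral function on `S` extends to a
flow, so the minor is `±1`. Otherwise the coboundary of the indicator function of a component of
the complement is a cut supported in `S`; it is orthogonal to every flow, so the minor vanishes.
By the Cauchy–Binet formula `det (ιᵀ ι)` is the sum of the squares of these minors, and it is also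
the order of `ℤ^g` modulo the image of `ιᵀ ι`.
-/

universe u

section Matrix

variable {I E R : Type*}

section CauchyBinet

theorem range_coe_equiv {S : Finset E} (e : I ≃ S) : Set.range (fun i => (e i : E)) = S := by
  rw [← Function.comp_def, e.surjective.range_comp, Subtype.range_coe]

variable [Fintype I]

theorem exists_perm_of_injective
    (e : ∀ S : {S : Finset E // S.card = Fintype.card I}, I ≃ S.1) {f : I → E}
    (hf : f.Injective) : ∃ S, ∃ σ : Equiv.Perm I, (fun i => (e S (σ i) : E)) = f := by
  classical
  let S : {S : Finset E // S.card = Fintype.card I} :=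
    ⟨Finset.univ.image f, Finset.card_image_of_injective _ hf⟩
  have hfS (i : I) : f i ∈ S.1 := Finset.mem_image_of_mem f (Finset.mem_univ i)
  let σ (i : I) : I := (e S).symm ⟨f i, hfS i⟩
  have hσ : σ.Injective := fun i j hij => hf (congrArg Subtype.val ((e S).symm.injective hij))
  exact ⟨S, Equiv.ofBijective σ (Finite.injective_iff_bijective.mp hσ), by ext i; simp [σ]⟩

variable [DecidableEq I] [CommRing R]

theorem det_mul_eq_sum_prod_mul_det_submatrix [Fintype E] (A : Matrix I E R) (B : Matrix E I R) :
    (A * B).det = ∑ f : I → E, (∏ i, A i (f i)) * (B.submatrix f id).det := by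
  have rows : A * B = of fun i => ∑ e, A i e • B e := by
    ext i j
    simp [mul_apply, Finset.sum_apply]
  calc (A * B).det
      = ∑ f : I → E, detRowAlternating fun i => A i (f i) • B (f i) := by
        rw [rows]
        exact detRowAlternating.toMultilinearMap.map_sum fun i e => A i e • B e
    _ = ∑ f : I → E, (∏ i, A i (f i)) * (B.submatrix f id).det :=
        Finset.sum_congr rfl fun f _ =>
          detRowAlternating.map_smul_univ (fun i => A i (f i)) fun i => B (f i)

theorem det_submatrix_id_mul_det_submatrix_id (A : Matrix I E R) (B : Matrix E I R)
    (f : I → E) :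
    (A.submatrix id f).det * (B.submatrix f id).det =
      ∑ σ : Equiv.Perm I, (∏ i, A i (f (σ i))) * (B.submatrix (f ∘ σ) id).det := by
  have det_left : (A.submatrix id f).det =
      ∑ σ : Equiv.Perm I, (Equiv.Perm.sign σ : ℤ) * ∏ i, A i (f (σ i)) := by
    rw [← det_transpose, det_apply']
    rfl
  rw [det_left, Finset.sum_mul]
  refine Finset.sum_congr rfl fun σ _ => ?_
  have det_right : (B.submatrix (f ∘ σ) id).det =
      (Equiv.Perm.sign σ : ℤ) * (B.submatrix f id).det := det_permute σ (B.submatrix f id)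
  rw [det_right]
  ring

/-- The bijections `e S` only order the rows of the minors; the summands do not depend on them. -/
theorem cauchy_binet [Fintype E] (A : Matrix I E R) (B : Matrix E I R)
    (e : ∀ S : {S : Finset E // S.card = Fintype.card I}, I ≃ S.1) :
    (A * B).det = ∑ S, (A.submatrix id fun i => (e S i : E)).det *
      (B.submatrix (fun i => (e S i : E)) id).det := by
  simp only [det_submatrix_id_mul_det_submatrix_id, det_mul_eq_sum_prod_mul_det_submatrix]
  rw [← Fintype.sum_prod_type']
  symm
  refine Fintype.sum_of_injective (fun p i => (e p.1 (p.2 i) : E)) ?_ _ _ ?_ fun _ => rfl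
  · rintro ⟨S, σ⟩ ⟨T, τ⟩ h
    have hST : S = T := Subtype.ext <| Finset.coe_injective <| by
      rw [← range_coe_equiv (σ.trans (e S)), ← range_coe_equiv (τ.trans (e T))]
      exact congrArg Set.range h
    subst hST
    have hστ : σ = τ :=
      Equiv.ext fun i => (e S).injective (Subtype.coe_injective (congrFun h i))
    rw [hστ]
  · intro f hf
    have hf' : ¬ f.Injective := fun h => hf <| by
      obtain ⟨S, σ, rfl⟩ := exists_perm_of_injective e h
      exact ⟨(S, σ), rfl⟩
    obtain ⟨i, j, hij, hne⟩ := Function.not_injective_iff.mp hf'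
    rw [det_zero_of_row_eq hne (by ext k; simp [hij]), mul_zero]

end CauchyBinet

variable [Fintype I] [DecidableEq I]

theorem det_transpose_mul_self_ne_zero [Fintype E] [CommRing R] [LinearOrder R]
    [IsStrictOrderedRing R] {A : Matrix E I R} (hA : LinearIndependent R A.col) :
    (Aᵀ * A).det ≠ 0 := by
  intro hdet
  obtain ⟨c, hc, hAc⟩ := exists_mulVec_eq_zero_iff.mpr hdet
  have norm_eq_zero : A *ᵥ c ⬝ᵥ A *ᵥ c = 0 := by
    rw [dotProduct_mulVec, ← mulVec_transpose, mulVec_mulVec, hAc, zero_dotProduct]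
  exact hc <| mulVec_injective_iff.mpr hA <| by
    rw [dotProduct_self_eq_zero.mp norm_eq_zero, mulVec_zero]

theorem card_quotient_range_toLin' {M : Matrix I I ℤ} (hM : M.det ≠ 0) :
    Nat.card ((I → ℤ) ⧸ LinearMap.range (toLin' M)) = M.det.natAbs := by
  have hinj : Function.Injective (toLin' M) :=
    mulVec_injective_iff.mpr (linearIndependent_cols_of_det_ne_zero hM)
  rw [← LinearMap.det_toLin' M]
  exact (Submodule.natAbs_det_equiv _ (LinearEquiv.ofInjective (toLin' M) hinj)).symm

end Matrix

theorem finrank_range_add_finrank_ker_of_hasRankNullity {R : Type*} {M : Type u} {N : Type*}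
    [Ring R] [HasRankNullity.{u} R] [StrongRankCondition R] [AddCommGroup M] [Module R M]
    [Module.Finite R M] [AddCommGroup N] [Module R N] (f : M →ₗ[R] N) :
    Module.finrank R (LinearMap.range f) + Module.finrank R (LinearMap.ker f) =
      Module.finrank R M := by
  rw [← f.quotKerEquivRange.finrank_eq, Submodule.finrank_quotient_add_finrank]

/-- A multigraph on `V` with edges indexed by `E`, each carrying an orientation;
loops and parallel edges are allowed. -/
structure OrientedMultigraph (V E : Type*) where
  /-- The vertex at which the coefficient of the edge in its boundary is `1`. -/
  head : E → V
  /-- The vertex at which the coefficient of the edge in its boundary is `-1`. -/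
  tail : E → V

namespace OrientedMultigraph

variable {V E I : Type*} (D : OrientedMultigraph V E)

/-- The simple graph on all vertices whose adjacencies are the non-loop edges in `T`. It records
only which vertices `T` connects: parallel edges are merged. -/
def spanningSubgraph (T : Set E) : SimpleGraph V :=
  SimpleGraph.fromEdgeSet ((fun e => s(D.head e, D.tail e)) '' T)

/-- A spanning tree, as an edge set: connected on all vertices, with one edge fewer than there are
vertices. Counting the elements of `T` excludes loops and parallel edges. -/
def IsSpanningTree [Fintype V] (T : Finset E) : Prop :=
  (D.spanningSubgraph T).Connected ∧ T.card + 1 = Fintype.card V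

/-- The signed incidence matrix, i.e. the matrix of the boundary map from edges to vertices. Its
kernel is the lattice of flows; the column of a loop is `0`. -/
def boundary [DecidableEq V] : Matrix V E ℤ :=
  of fun v e => (Pi.single (D.head e) 1 - Pi.single (D.tail e) 1 : V → ℤ) v

variable {D}

theorem preconnected_spanningSubgraph_iff {T : Set E} :
    (D.spanningSubgraph T).Preconnected ↔
      ∀ φ : V → ℤ, (∀ e ∈ T, φ (D.head e) = φ (D.tail e)) → ∀ u v, φ u = φ v := by
  classical
  constructor
  · intro hT φ hφ u v
    obtain ⟨p⟩ := hT u v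
    induction p with
    | nil => rfl
    | cons hadj _ ih =>
      obtain ⟨⟨e, he, hends⟩, _⟩ := (SimpleGraph.fromEdgeSet_adj _).mp hadj
      refine Eq.trans ?_ ih
      rcases Sym2.eq_iff.mp hends with ⟨rfl, rfl⟩ | ⟨rfl, rfl⟩
      exacts [hφ e he, (hφ e he).symm]
  · intro h u v
    let φ (w : V) : ℤ := if (D.spanningSubgraph T).Reachable u w then 1 else 0
    have hφ : ∀ e ∈ T, φ (D.head e) = φ (D.tail e) := fun e he => by
      by_cases hloop : D.head e = D.tail e
      · rw [hloop]
      have hadj : (D.spanningSubgraph T).Adj (D.head e) (D.tail e) :=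
        (SimpleGraph.fromEdgeSet_adj _).mpr ⟨⟨e, he, rfl⟩, hloop⟩
      have hreach : (D.spanningSubgraph T).Reachable u (D.head e) ↔
          (D.spanningSubgraph T).Reachable u (D.tail e) :=
        ⟨fun h => h.trans hadj.reachable, fun h => h.trans hadj.symm.reachable⟩
      simp only [φ, hreach]
    by_contra huv
    simpa [φ, huv] using h φ hφ u v

section Boundary

variable [DecidableEq V]

theorem boundary_mulVec_single [Fintype E] [DecidableEq E] (e : E) :
    D.boundary *ᵥ Pi.single e 1 = Pi.single (D.head e) 1 - Pi.single (D.tail e) 1 := by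
  rw [mulVec_single_one]
  rfl

theorem vecMul_boundary [Fintype V] (φ : V → ℤ) (e : E) :
    (φ ᵥ* D.boundary) e = φ (D.head e) - φ (D.tail e) := by
  change φ ⬝ᵥ (Pi.single (D.head e) 1 - Pi.single (D.tail e) 1) = _
  simp [dotProduct_sub]

theorem sum_boundary_mulVec [Fintype V] [Fintype E] (x : E → ℤ) :
    ∑ v, (D.boundary *ᵥ x) v = 0 := by
  have hone : (1 : V → ℤ) ᵥ* D.boundary = 0 := by
    ext e
    simp [vecMul_boundary]
  rw [← one_dotProduct, dotProduct_mulVec, hone, zero_dotProduct]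

variable [Fintype E]

theorem exists_boundary_mulVec_eq_of_reachable {T : Set E} {u v : V}
    (huv : (D.spanningSubgraph T).Reachable u v) :
    ∃ x : E → ℤ, (∀ e ∉ T, x e = 0) ∧ D.boundary *ᵥ x = Pi.single u 1 - Pi.single v 1 := by
  classical
  obtain ⟨p⟩ := huv
  induction p with
  | nil => exact ⟨0, by simp, by simp⟩
  | cons hadj _ ih =>
    obtain ⟨x, hxT, hx⟩ := ih
    obtain ⟨⟨e, he, hends⟩, _⟩ := (SimpleGraph.fromEdgeSet_adj _).mp hadj
    have hsingle : ∀ d ∉ T, (Pi.single e 1 : E → ℤ) d = 0 := fun d hd =>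
      Pi.single_eq_of_ne (by rintro rfl; exact hd he) 1
    rcases Sym2.eq_iff.mp hends with ⟨rfl, rfl⟩ | ⟨rfl, rfl⟩
    · refine ⟨x + Pi.single e 1, fun d hd => by simp [hsingle d hd, hxT d hd], ?_⟩
      rw [mulVec_add, boundary_mulVec_single, hx]
      abel
    · refine ⟨x - Pi.single e 1, fun d hd => by simp [hsingle d hd, hxT d hd], ?_⟩
      rw [mulVec_sub, boundary_mulVec_single, hx]
      abel

variable [Fintype V]

theorem exists_boundary_mulVec_eq {T : Set E} (hT : (D.spanningSubgraph T).Connected)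
    {b : V → ℤ} (hb : ∑ v, b v = 0) :
    ∃ x : E → ℤ, (∀ e ∉ T, x e = 0) ∧ D.boundary *ᵥ x = b := by
  obtain ⟨r⟩ := hT.nonempty
  choose x hxT hx using fun v => exists_boundary_mulVec_eq_of_reachable (hT.preconnected v r)
  refine ⟨∑ v, b v • x v, fun e he => by simp [hxT _ e he], ?_⟩
  calc D.boundary *ᵥ ∑ v, b v • x v
      = ∑ v, b v • (Pi.single v 1 - Pi.single r 1) := by
        simp only [mulVec_sum, mulVec_smul, hx]
    _ = b - (∑ v, b v) • Pi.single r 1 := by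
        simp only [smul_sub, Finset.sum_sub_distrib, ← Finset.sum_smul]
        rw [← pi_eq_sum_univ']
    _ = b := by rw [hb, zero_smul, sub_zero]

variable (D) in
theorem finrank_ker_boundary_add_card [DecidableEq E]
    (hD : (D.spanningSubgraph Set.univ).Connected) :
    Module.finrank ℤ (LinearMap.ker (toLin' D.boundary)) + Fintype.card V =
      Fintype.card E + 1 := by
  obtain ⟨r⟩ := hD.nonempty
  let total : (V → ℤ) →ₗ[ℤ] ℤ := Fintype.linearCombination ℤ fun _ => 1
  have htotal (b : V → ℤ) : total b = ∑ v, b v := by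
    simp [total, Fintype.linearCombination_apply]
  have range_boundary : LinearMap.range (toLin' D.boundary) = LinearMap.ker total := by
    ext b
    rw [LinearMap.mem_ker, htotal]
    constructor
    · rintro ⟨x, rfl⟩
      exact sum_boundary_mulVec x
    · intro hb
      obtain ⟨x, -, hx⟩ := exists_boundary_mulVec_eq hD hb
      exact ⟨x, hx⟩
  have range_total : LinearMap.range total = ⊤ :=
    LinearMap.range_eq_top.mpr fun a => ⟨Pi.single r a, by simp [htotal]⟩
  have rank_boundary := finrank_range_add_finrank_ker_of_hasRankNullity (toLin' D.boundary)
  have rank_total := finrank_range_add_finrank_ker_of_hasRankNullity total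
  rw [range_total, finrank_top, Module.finrank_self, Module.finrank_fintype_fun_eq_card]
    at rank_total
  rw [range_boundary, Module.finrank_fintype_fun_eq_card] at rank_boundary
  omega

end Boundary

section Minors

variable [Finite V] [DecidableEq V] [Fintype E]

theorem exists_flow_eqOn_compl {T : Set E} (hT : (D.spanningSubgraph T).Connected) (y : E → ℤ) :
    ∃ x : E → ℤ, D.boundary *ᵥ x = 0 ∧ Set.EqOn x y Tᶜ := by
  cases nonempty_fintype V
  obtain ⟨z, hzT, hz⟩ := exists_boundary_mulVec_eq hT (sum_boundary_mulVec (D := D) y)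
  exact ⟨y - z, by rw [mulVec_sub, hz, sub_self], fun e he => by simp [hzT e he]⟩

variable [Fintype I] [DecidableEq I] {iota : Matrix E I ℤ} {f : I → E}

theorem isUnit_det_submatrix_of_connected
    (hspan : ∀ x, D.boundary *ᵥ x = 0 → ∃ c, iota *ᵥ c = x) (hf : f.Injective)
    (hconn : (D.spanningSubgraph (Set.range f)ᶜ).Connected) :
    IsUnit (iota.submatrix f id).det := by
  rw [← isUnit_iff_isUnit_det, ← mulVec_surjective_iff_isUnit]
  intro y
  obtain ⟨x, hx, hxy⟩ := exists_flow_eqOn_compl hconn (Function.extend f y 0)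
  obtain ⟨c, rfl⟩ := hspan x hx
  refine ⟨c, funext fun i => ?_⟩
  calc (iota.submatrix f id *ᵥ c) i = (iota *ᵥ c) (f i) := rfl
    _ = Function.extend f y 0 (f i) := hxy (by simp)
    _ = y i := hf.extend_apply y 0 i

theorem det_submatrix_eq_zero_of_not_preconnected
    (hflow : D.boundary * iota = 0) (hD : (D.spanningSubgraph Set.univ).Preconnected)
    (hf : f.Injective) (hconn : ¬ (D.spanningSubgraph (Set.range f)ᶜ).Preconnected) :
    (iota.submatrix f id).det = 0 := by
  cases nonempty_fintype V
  rw [preconnected_spanningSubgraph_iff] at hconn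
  push Not at hconn
  obtain ⟨φ, hφ, u, v, huv⟩ := hconn
  have cut_eq_zero : ∀ e ∉ Set.range f, (φ ᵥ* D.boundary) e = 0 := fun e he => by
    rw [vecMul_boundary, hφ e he, sub_self]
  rw [← exists_vecMul_eq_zero_iff]
  refine ⟨(φ ᵥ* D.boundary) ∘ f, fun hzero => huv ?_, ?_⟩
  · refine preconnected_spanningSubgraph_iff.mp hD φ (fun e _ => ?_) u v
    rw [← sub_eq_zero, ← vecMul_boundary]
    by_cases he : e ∈ Set.range f
    · obtain ⟨i, rfl⟩ := he
      exact congrFun hzero i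
    · exact cut_eq_zero e he
  · calc ((φ ᵥ* D.boundary) ∘ f) ᵥ* iota.submatrix f id = φ ᵥ* D.boundary ᵥ* iota := by
          ext j
          exact Fintype.sum_of_injective f hf _ _
            (fun e he => by rw [cut_eq_zero e he, zero_mul]) fun _ => rfl
      _ = 0 := by rw [vecMul_vecMul, hflow, vecMul_zero]

theorem det_transpose_mul_self_eq_card_connected_compl
    (hD : (D.spanningSubgraph Set.univ).Connected) (hflow : D.boundary * iota = 0)
    (hspan : ∀ x, D.boundary *ᵥ x = 0 → ∃ c, iota *ᵥ c = x) :
    (iotaᵀ * iota).det = Nat.card {S : {S : Finset E // S.card = Fintype.card I} //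
      (D.spanningSubgraph (S : Set E)ᶜ).Connected} := by
  classical
  let e (S : {S : Finset E // S.card = Fintype.card I}) : I ≃ S.1 :=
    Fintype.equivOfCardEq (by rw [Fintype.card_coe, S.2])
  have minor_sq (S) : (iota.submatrix (fun i => (e S i : E)) id).det ^ 2 =
      if (D.spanningSubgraph (S : Set E)ᶜ).Connected then 1 else 0 := by
    have hinj : Function.Injective fun i => (e S i : E) :=
      Subtype.coe_injective.comp (e S).injective
    rw [← range_coe_equiv (e S)]
    split_ifs with hS
    · exact Int.isUnit_sq (isUnit_det_submatrix_of_connected hspan hinj hS)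
    · have hS' := fun h => hS ((SimpleGraph.connected_iff _).mpr ⟨h, hD.nonempty⟩)
      rw [det_submatrix_eq_zero_of_not_preconnected hflow hD.preconnected hinj hS',
        zero_pow two_ne_zero]
  calc (iotaᵀ * iota).det
      = ∑ S, (iota.submatrix (fun i => (e S i : E)) id).det ^ 2 := by
        rw [cauchy_binet _ _ e]
        refine Finset.sum_congr rfl fun S _ => ?_
        rw [sq, ← transpose_submatrix, det_transpose]
    _ = _ := by
        simp only [minor_sq, Finset.sum_boole, Nat.card_eq_fintype_card, Fintype.card_subtype]

end Minors

theorem card_connected_compl_eq_card_isSpanningTree [Fintype V] [Fintype E] {g : ℕ}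
    (hg : g + Fintype.card V = Fintype.card E + 1) :
    Nat.card {S : {S : Finset E // S.card = g} // (D.spanningSubgraph (S : Set E)ᶜ).Connected} =
      Nat.card {T : Finset E // D.IsSpanningTree T} := by
  classical
  refine Nat.card_congr <| (Equiv.subtypeSubtypeEquivSubtypeInter (fun S : Finset E => S.card = g)
      fun S => (D.spanningSubgraph (S : Set E)ᶜ).Connected).trans <|
    Equiv.subtypeEquiv (Function.Involutive.toPerm _ compl_involutive) fun S => ?_
  have hcard : S.card = g ↔ Sᶜ.card + 1 = Fintype.card V := by
    have := Finset.card_add_card_compl S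
    omega
  simp only [IsSpanningTree, hcard, Function.Involutive.coe_toPerm, Finset.coe_compl, and_comm]

theorem isSpanningTree_iff_isTree [Fintype V] (hloop : ∀ e, D.head e ≠ D.tail e)
    (hinj : Function.Injective fun e => s(D.head e, D.tail e)) {T : Finset E} :
    D.IsSpanningTree T ↔
      (SimpleGraph.fromEdgeSet ((fun e => s(D.head e, D.tail e)) '' ↑T)).IsTree := by
  have edgeSet_eq : (D.spanningSubgraph T).edgeSet = (fun e => s(D.head e, D.tail e)) '' T := by
    rw [spanningSubgraph, SimpleGraph.edgeSet_fromEdgeSet, sdiff_eq_left, Set.disjoint_left]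
    rintro _ ⟨e, _, rfl⟩ hdiag
    exact hloop e (by simpa using hdiag)
  have card_edgeSet : Nat.card (D.spanningSubgraph T).edgeSet = T.card := by
    rw [edgeSet_eq, Nat.card_image_of_injective hinj, Nat.card_coe_set_eq, Set.ncard_coe_finset]
  rw [← spanningSubgraph, SimpleGraph.isTree_iff_connected_and_card, card_edgeSet,
    Nat.card_eq_fintype_card, IsSpanningTree]

theorem le_spanningSubgraph_univ {G : SimpleGraph V}
    (hsurj : ∀ a ∈ G.edgeSet, ∃ e, s(D.head e, D.tail e) = a) :
    G ≤ D.spanningSubgraph Set.univ := fun _ _ hadj =>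
  (SimpleGraph.fromEdgeSet_adj _).mpr ⟨by simpa using hsurj s(_, _) hadj, hadj.ne⟩

theorem eq_boundary [DecidableEq V] (hloop : ∀ e, D.head e ≠ D.tail e) {del : Matrix V E ℤ}
    (hdel : ∀ v e, del v e = if v = D.head e then 1 else if v = D.tail e then -1 else 0) :
    del = D.boundary := by
  ext v e
  have := hloop e
  simp only [hdel, boundary, of_apply, Pi.sub_apply, Pi.single_apply]
  grind

end OrientedMultigraph

theorem stmt_19_general {V E I : Type*} [Fintype V] [DecidableEq V] [Fintype E] [DecidableEq E]
    [Fintype I] [DecidableEq I] (D : OrientedMultigraph V E)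
    (hD : (D.spanningSubgraph Set.univ).Connected) (iota : Matrix E I ℤ)
    (hli : LinearIndependent ℤ iotaᵀ)
    (hspan : Submodule.span ℤ (Set.range iotaᵀ) = LinearMap.ker (toLin' D.boundary)) :
    Finite ((I → ℤ) ⧸ LinearMap.range (toLin' (iotaᵀ * iota))) ∧
    Nat.card ((I → ℤ) ⧸ LinearMap.range (toLin' (iotaᵀ * iota))) =
      Nat.card {T : Finset E // D.IsSpanningTree T} := by
  have genus : Fintype.card I + Fintype.card V = Fintype.card E + 1 := by
    rw [← D.finrank_ker_boundary_add_card hD, ← hspan, finrank_span_eq_card hli]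
  have range_iota : LinearMap.range (toLin' iota) = LinearMap.ker (toLin' D.boundary) :=
    (range_toLin' iota).trans hspan
  have hflow : D.boundary * iota = 0 := by
    rw [← LinearEquiv.map_eq_zero_iff toLin', toLin'_mul]
    exact LinearMap.range_le_ker_iff.mp range_iota.le
  have hdet : (iotaᵀ * iota).det ≠ 0 := det_transpose_mul_self_ne_zero hli
  have hcard := card_quotient_range_toLin' hdet
  refine ⟨Nat.finite_of_card_ne_zero (by rwa [hcard, Int.natAbs_ne_zero]), ?_⟩
  rw [hcard, OrientedMultigraph.det_transpose_mul_self_eq_card_connected_compl hD hflow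
      fun x hx => range_iota.ge hx, Int.natAbs_natCast,
    OrientedMultigraph.card_connected_compl_eq_card_isSpanningTree genus]

/-- If the columns of `ι` form a cycle `M`-basis of the flow lattice of a connected
simple graph `G` (a `ℤ`-basis with pairwise nonpositive inner products), then the
set of equivalence classes of `ℤ^g` modulo the `ℤ`-image of `L* = ιᵀι` is finite,
of cardinality the number of spanning trees of `G`. -/
theorem stmt_19 (n m g : ℕ) (G : SimpleGraph (Fin (n + 1))) (hG : G.Connected)
    (hg : m = n + g)
    (head tail : Fin m → Fin (n + 1))
    (hadj : ∀ k, G.Adj (head k) (tail k))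
    (hinj : Function.Injective fun k => s(head k, tail k))
    (hsurj : ∀ e ∈ G.edgeSet, ∃ k, s(head k, tail k) = e)
    (del : Matrix (Fin (n + 1)) (Fin m) ℤ)
    (hdel : ∀ v k, del v k = if v = head k then 1 else if v = tail k then -1 else 0)
    (iota : Matrix (Fin m) (Fin g) ℤ)
    (hli : LinearIndependent ℤ iota.transpose)
    (hspan : Submodule.span ℤ (Set.range iota.transpose) = LinearMap.ker (Matrix.toLin' del))
    (hM : ∀ i j, i ≠ j → iota.transpose i ⬝ᵥ iota.transpose j ≤ 0) :
    Finite ((Fin g → ℤ) ⧸ LinearMap.range (Matrix.toLin' (iota.transpose * iota))) ∧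
    Nat.card ((Fin g → ℤ) ⧸ LinearMap.range (Matrix.toLin' (iota.transpose * iota))) =
      Nat.card {T : Finset (Fin m) //
        (SimpleGraph.fromEdgeSet ((fun k => s(head k, tail k)) '' ↑T)).IsTree} := by
  let D : OrientedMultigraph (Fin (n + 1)) (Fin m) := ⟨head, tail⟩
  have hloop : ∀ e, D.head e ≠ D.tail e := fun e => (hadj e).ne
  have hD := hG.mono (OrientedMultigraph.le_spanningSubgraph_univ (D := D) hsurj)
  rw [OrientedMultigraph.eq_boundary hloop hdel] at hspan
  simpa only [OrientedMultigraph.isSpanningTree_iff_isTree hloop hinj] using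
    stmt_19_general D hD iota hli hspan
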